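/- arXiv:0711.1534 — 3 statements merged into one kernel-verified Lean document; each statement's English description precedes it below -/
import Mathlib

section
/- Let G be a group, A an abelian group equipped with a translation-invariant metric ρ (i.e. ρ(a+c, b+c) = ρ(a,b) for all a,b,c ∈ A), S : G → A a group homomorphism, and j : A → G a group homomorphism with S ∘ j = id_A. Let N = ker S and let d_N be a metric on N that is right-invariant (d_N(xk, yk) = d_N(x,y) for all x,y,k ∈ N) and invariant under conjugation by every element of G (d_N(gxg⁻¹, gyg⁻¹) = d_N(x,y) for all x,y ∈ N, g ∈ G). For g ∈ G set n(g) = j(S(g))⁻¹ · g, which lies in N. Then d(g,h) := ρ(S(g), S(h)) + d_N(n(g), n(h)) defines a right-invariant metric on G whose restriction to N × N equals d_N. -/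
/-!
The map `g ↦ (S g, n g)` is injective, and `d` is the `ℓ¹` product metric pulled back along it,
so the metric axioms come for free. The crossed relation
`n (g * k) = (j (S k))⁻¹ * n g * j (S k) * n k` shows that right translation by `k` acts on the
kernel coordinate as a conjugation by an element of the range of `j` followed by a right
translation in the kernel, hence isometrically.
-/

section Splitting

variable {G Q : Type*} [Group G] [Group Q] {S : G →* Q} {j : Q →* G}

/-- The kernel component `n g = (j (S g))⁻¹ * g` of `g` under the splitting `j` of `S`, bundled as
an element of `S.ker`; it is the right-hand factor of `g = j (S g) * n g`. -/
def kernelPart (hSj : Function.RightInverse j S) (g : G) : S.ker :=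
  ⟨(j (S g))⁻¹ * g, by simp [MonoidHom.mem_ker, hSj (S g)]⟩

theorem map_mul_kernelPart (hSj : Function.RightInverse j S) (g : G) :
    j (S g) * kernelPart hSj g = g :=
  mul_inv_cancel_left _ _

theorem kernelPart_mul (hSj : Function.RightInverse j S) (g k : G) :
    kernelPart hSj (g * k) =
      MulAut.conjNormal (j (S k)⁻¹) (kernelPart hSj g) * kernelPart hSj k := by
  ext
  simp only [kernelPart, Subgroup.coe_mul, MulAut.conjNormal_apply, map_mul, map_inv j]
  group

theorem kernelPart_coe (hSj : Function.RightInverse j S) (x : S.ker) :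
    kernelPart hSj x = x := by
  ext
  simp [kernelPart, MonoidHom.mem_ker.mp x.2]

/-- The coordinates `(S g, n g)` of `g` given by a splitting of `S`. The target is `WithLp 1` so
that its distance is the sum of the two coordinate distances. -/
def splitCoords (hSj : Function.RightInverse j S) (g : G) : WithLp 1 (Q × S.ker) :=
  WithLp.toLp 1 (S g, kernelPart hSj g)

theorem splitCoords_injective (hSj : Function.RightInverse j S) :
    Function.Injective (splitCoords hSj) := by
  intro g h hgh
  obtain ⟨hS, hn⟩ := Prod.mk.inj (WithLp.toLp_injective 1 hgh)
  rw [← map_mul_kernelPart hSj g, ← map_mul_kernelPart hSj h, hS, hn]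

section PseudoMetric

variable [PseudoMetricSpace Q] [PseudoMetricSpace S.ker]

theorem dist_splitCoords (hSj : Function.RightInverse j S) (g h : G) :
    dist (splitCoords hSj g) (splitCoords hSj h) =
      dist (S g) (S h) + dist (kernelPart hSj g) (kernelPart hSj h) := by
  simp [WithLp.prod_dist_eq_add (p := 1) (by simp), splitCoords]

theorem dist_splitCoords_coe (hSj : Function.RightInverse j S) (x y : S.ker) :
    dist (splitCoords hSj x) (splitCoords hSj y) = dist x y := by
  rw [dist_splitCoords, kernelPart_coe, kernelPart_coe, MonoidHom.mem_ker.mp x.2,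
    MonoidHom.mem_ker.mp y.2, dist_self, zero_add]

theorem dist_splitCoords_mul_right (hSj : Function.RightInverse j S)
    (h_base : ∀ a b c : Q, dist (a * c) (b * c) = dist a b)
    (h_ker : ∀ x y k : S.ker, dist (x * k) (y * k) = dist x y)
    (h_conj : ∀ (q : Q) (x y : S.ker),
      dist (MulAut.conjNormal (j q) x) (MulAut.conjNormal (j q) y) = dist x y)
    (g h k : G) :
    dist (splitCoords hSj (g * k)) (splitCoords hSj (h * k)) =
      dist (splitCoords hSj g) (splitCoords hSj h) := by
  simp only [dist_splitCoords, kernelPart_mul, map_mul, h_base, h_ker, h_conj]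

end PseudoMetric

end Splitting

/-- The metric on `{x // p x}` given by a real function `d` on the ambient type that satisfies the
metric axioms at the points where `p` holds; `d` is arbitrary elsewhere. -/
abbrev metricSpaceOfDistOn {X : Type*} (p : X → Prop) (d : X → X → ℝ)
    (d_symm : ∀ x y, p x → p y → d x y = d y x)
    (d_tri : ∀ x y z, p x → p y → p z → d x z ≤ d x y + d y z)
    (d_eq : ∀ x y, p x → p y → (d x y = 0 ↔ x = y)) : MetricSpace {x // p x} where
  dist x y := d x y
  dist_self x := (d_eq x x x.2 x.2).mpr rfl
  dist_comm x y := d_symm x y x.2 y.2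
  dist_triangle x y z := d_tri x y z x.2 y.2 z.2
  eq_of_dist_eq_zero {x y} hxy := Subtype.ext ((d_eq x y x.2 y.2).mp hxy)

theorem extend_metric_from_kernel_general {G A : Type*} [Group G] [AddGroup A]
    [MetricSpace A]
    (h_transl : ∀ a b c : A, dist (a + c) (b + c) = dist a b)
    (S : G → A) (hS : ∀ g h : G, S (g * h) = S g + S h)
    (j : A → G) (hj : ∀ a b : A, j (a + b) = j a * j b)
    (hSj : ∀ a : A, S (j a) = a)
    (dN : G → G → ℝ)
    (hN_symm : ∀ x y : G, S x = 0 → S y = 0 → dN x y = dN y x)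
    (hN_tri : ∀ x y z : G, S x = 0 → S y = 0 → S z = 0 →
      dN x z ≤ dN x y + dN y z)
    (hN_eq : ∀ x y : G, S x = 0 → S y = 0 → (dN x y = 0 ↔ x = y))
    (hN_right : ∀ x y k : G, S x = 0 → S y = 0 → S k = 0 →
      dN (x * k) (y * k) = dN x y)
    (hN_conj : ∀ x y : G, S x = 0 → S y = 0 → ∀ a : A,
      dN (j a * x * (j a)⁻¹) (j a * y * (j a)⁻¹) = dN x y)
    (n : G → G) (hn : ∀ g : G, n g = (j (S g))⁻¹ * g)
    (d : G → G → ℝ)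
    (hd : ∀ g h : G, d g h = dist (S g) (S h) + dN (n g) (n h)) :
    (∀ g h : G, d g h = d h g) ∧
    (∀ g h k : G, d g h ≤ d g k + d k h) ∧
    (∀ g h : G, d g h = 0 ↔ g = h) ∧
    (∀ g h k : G, d (g * k) (h * k) = d g h) ∧
    (∀ x y : G, S x = 0 → S y = 0 → d x y = dN x y) := by
  let S' : G →* Multiplicative A := MonoidHom.mk' S hS
  let j' : Multiplicative A →* G := MonoidHom.mk' j hj
  have hSj' : Function.RightInverse j' S' := hSj
  let _ : MetricSpace S'.ker := metricSpaceOfDistOn (S · = 0) dN hN_symm hN_tri hN_eq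
  have d_eq (g h : G) : d g h = dist (splitCoords hSj' g) (splitCoords hSj' h) := by
    rw [hd, hn, hn, dist_splitCoords]
    rfl
  simp only [d_eq]
  exact ⟨fun g h => dist_comm _ _, fun g h k => dist_triangle _ _ _,
    fun g h => dist_eq_zero.trans (splitCoords_injective hSj').eq_iff,
    dist_splitCoords_mul_right hSj' h_transl
      (fun x y k => hN_right x y k x.2 y.2 k.2) (fun a x y => hN_conj x y x.2 y.2 a),
    fun x y hx hy => dist_splitCoords_coe hSj' ⟨x, hx⟩ ⟨y, hy⟩⟩

/-- If `S : G → A` is a homomorphism onto an abelian group with a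
translation-invariant metric, `j` a homomorphic right inverse of `S`, and `d_N`
a right-invariant, conjugation-invariant metric on `N = ker S`, then
`d g h = ρ (S g) (S h) + d_N (n g) (n h)` (with `n g = j (S g)⁻¹ * g`)
is a right-invariant metric on `G` extending `d_N`. -/
theorem extend_metric_from_kernel {G A : Type*} [Group G] [AddCommGroup A]
    [MetricSpace A]
    (h_transl : ∀ a b c : A, dist (a + c) (b + c) = dist a b)
    (S : G → A) (hS : ∀ g h : G, S (g * h) = S g + S h)
    (j : A → G) (hj : ∀ a b : A, j (a + b) = j a * j b)
    (hSj : ∀ a : A, S (j a) = a)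
    (dN : G → G → ℝ)
    (hN_symm : ∀ x y : G, S x = 0 → S y = 0 → dN x y = dN y x)
    (hN_tri : ∀ x y z : G, S x = 0 → S y = 0 → S z = 0 →
      dN x z ≤ dN x y + dN y z)
    (hN_eq : ∀ x y : G, S x = 0 → S y = 0 → (dN x y = 0 ↔ x = y))
    (hN_right : ∀ x y k : G, S x = 0 → S y = 0 → S k = 0 →
      dN (x * k) (y * k) = dN x y)
    (hN_conj : ∀ x y : G, S x = 0 → S y = 0 → ∀ g : G,
      dN (g * x * g⁻¹) (g * y * g⁻¹) = dN x y)
    (n : G → G) (hn : ∀ g : G, n g = (j (S g))⁻¹ * g)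
    (d : G → G → ℝ)
    (hd : ∀ g h : G, d g h = dist (S g) (S h) + dN (n g) (n h)) :
    (∀ g h : G, d g h = d h g) ∧
    (∀ g h k : G, d g h ≤ d g k + d k h) ∧
    (∀ g h : G, d g h = 0 ↔ g = h) ∧
    (∀ g h k : G, d (g * k) (h * k) = d g h) ∧
    (∀ x y : G, S x = 0 → S y = 0 → d x y = dN x y) :=
  extend_metric_from_kernel_general h_transl S hS j hj hSj dN hN_symm hN_tri hN_eq hN_right
    (fun x y hx hy a => hN_conj x y hx hy (j a)) n hn d hd
end

section
/- Let E be a real Banach space and let G : ℝ × ℝ × E → E be a smooth map such that for each (s,t) the map G_{s,t} := G(s,t,·) : E → E is a smooth diffeomorphism with G smooth jointly in all variables, and such that the families of vector fields V and Z defined by V(s,t, G(s,t,x)) = ∂G/∂t(s,t,x) and Z(s,t, G(s,t,x)) = ∂G/∂s(s,t,x) are smooth. Then for all s, t and all y ∈ E: ∂V/∂s(s,t,y) = ∂Z/∂t(s,t,y) + D_yZ(s,t,y)(V(s,t,y)) − D_yV(s,t,y)(Z(s,t,y)), where D_y denotes the Fréchet derivative in the space variable. In other words, ∂_s V = ∂_t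 Z + [V, Z], where the bracket is given by [V,Z](y) = DZ(y)·V(y) − DV(y)·Z(y). -/
/-!
Fix `x` and put `g s t = G s t x`, so that `V s t (g s t) = ∂ₜg` and `Z s t (g s t) = ∂ₛg`.
Differentiating the first relation in `s` and the second in `t`, the chain rule gives
`∂ₛ∂ₜg = ∂ₛV + DV(Z)` and `∂ₜ∂ₛg = ∂ₜZ + DZ(V)` at `g s t`. The mixed partial derivatives of `g`
agree, and surjectivity of `G s t` makes `g s t` an arbitrary point of `E`.
-/

open Filter
open Function (uncurry)
open scoped Topology

section

variable {𝕜 E F : Type*} [NontriviallyNormedField 𝕜]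
  [NormedAddCommGroup E] [NormedSpace 𝕜 E] [NormedAddCommGroup F] [NormedSpace 𝕜 F]

theorem lineDeriv_uncurry_one_zero {M : Type*} [AddCommGroup M] [Module 𝕜 M]
    (f : 𝕜 → M → F) (s : 𝕜) (x : M) :
    lineDeriv 𝕜 (uncurry f) (s, x) (1, 0) = deriv (fun σ => f σ x) s := by
  simpa [lineDeriv] using deriv_comp_const_add (fun σ => f σ x) s 0

theorem lineDeriv_uncurry_zero_one {M : Type*} [AddCommGroup M] [Module 𝕜 M]
    (f : M → 𝕜 → F) (x : M) (t : 𝕜) :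
    lineDeriv 𝕜 (uncurry f) (x, t) (0, 1) = deriv (f x) t := by
  simpa [lineDeriv] using deriv_comp_const_add (f x) t 0

theorem deriv_comp_curve {W : 𝕜 → E → F} {c : 𝕜 → E} {s : 𝕜}
    (hW : DifferentiableAt 𝕜 (uncurry W) (s, c s)) (hc : DifferentiableAt 𝕜 c s) :
    deriv (fun σ => W σ (c σ)) s =
      deriv (fun σ => W σ (c s)) s + fderiv 𝕜 (W s) (c s) (deriv c s) := by
  set W' := fderiv 𝕜 (uncurry W) (s, c s)
  have h_total : HasDerivAt (fun σ => W σ (c σ)) (W' (1, deriv c s)) s :=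
    hW.hasFDerivAt.comp_hasDerivAt (f := fun σ => (σ, c σ)) s
      ((hasDerivAt_id s).prodMk hc.hasDerivAt)
  have h_time : deriv (fun σ => W σ (c s)) s = W' (1, 0) := by
    rw [← lineDeriv_uncurry_one_zero, hW.lineDeriv_eq_fderiv]
  have h_space : HasFDerivAt (W s) (W' ∘L .inr 𝕜 𝕜 E) (c s) :=
    hW.hasFDerivAt.comp (c s) (hasFDerivAt_prodMk_right s (c s))
  calc deriv (fun σ => W σ (c σ)) s
      = W' (1, deriv c s) := h_total.deriv
    _ = W' (1, 0) + W' (0, deriv c s) := by simp [← map_add]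
    _ = deriv (fun σ => W σ (c s)) s + fderiv 𝕜 (W s) (c s) (deriv c s) := by
      rw [h_time, h_space.fderiv]
      rfl

theorem lineDeriv_lineDeriv_eq_fderiv_fderiv {f : E → F} {x : E}
    (hf : ContDiffAt 𝕜 2 f x) (v w : E) :
    lineDeriv 𝕜 (fun y => lineDeriv 𝕜 f y v) x w = fderiv 𝕜 (fderiv 𝕜 f) x w v := by
  have h_near : (fun y => lineDeriv 𝕜 f y v) =ᶠ[𝓝 x] fun y => fderiv 𝕜 f y v := by
    filter_upwards [hf.eventually (by simp)] with y hy
    exact (hy.differentiableAt two_ne_zero).lineDeriv_eq_fderiv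
  have hf' : DifferentiableAt 𝕜 (fderiv 𝕜 f) x :=
    (hf.fderiv_right (m := 1) one_add_one_eq_two.le).differentiableAt one_ne_zero
  rw [h_near.lineDeriv_eq,
    (hf'.clm_apply (differentiableAt_const v)).lineDeriv_eq_fderiv,
    fderiv_clm_apply hf' (differentiableAt_const v)]
  simp

theorem lineDeriv_lineDeriv_comm {f : E → F} {x : E} {n : WithTop ℕ∞}
    (hn : minSmoothness 𝕜 2 ≤ n) (hf : ContDiffAt 𝕜 n f x) (v w : E) :
    lineDeriv 𝕜 (fun y => lineDeriv 𝕜 f y v) x w =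
      lineDeriv 𝕜 (fun y => lineDeriv 𝕜 f y w) x v := by
  have hf₂ : ContDiffAt 𝕜 2 f x := hf.of_le (le_minSmoothness.trans hn)
  rw [lineDeriv_lineDeriv_eq_fderiv_fderiv hf₂, lineDeriv_lineDeriv_eq_fderiv_fderiv hf₂]
  exact (hf.isSymmSndFDerivAt hn).eq w v

theorem deriv_deriv_comm {f : 𝕜 → 𝕜 → F} {s t : 𝕜} {n : WithTop ℕ∞}
    (hn : minSmoothness 𝕜 2 ≤ n) (hf : ContDiffAt 𝕜 n (uncurry f) (s, t)) :
    deriv (fun σ => deriv (f σ) t) s = deriv (fun τ => deriv (fun σ => f σ τ) s) t := by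
  have h_right : (fun p => lineDeriv 𝕜 (uncurry f) p (0, 1)) = uncurry fun σ τ => deriv (f σ) τ :=
    funext fun p => lineDeriv_uncurry_zero_one f p.1 p.2
  have h_left : (fun p => lineDeriv 𝕜 (uncurry f) p (1, 0)) =
      uncurry fun σ τ => deriv (fun σ' => f σ' τ) σ :=
    funext fun p => lineDeriv_uncurry_one_zero f p.1 p.2
  have h_comm := lineDeriv_lineDeriv_comm hn hf (0, 1) (1, 0)
  rwa [h_right, h_left, lineDeriv_uncurry_one_zero, lineDeriv_uncurry_zero_one] at h_comm

theorem two_parameter_velocity_identity_general {g : 𝕜 → 𝕜 → E} {V Z : 𝕜 → 𝕜 → E → E}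
    {s t : 𝕜} {n : WithTop ℕ∞} (hn : minSmoothness 𝕜 2 ≤ n)
    (hg : ContDiffAt 𝕜 n (uncurry g) (s, t))
    (hV : DifferentiableAt 𝕜 (fun p : 𝕜 × E => V p.1 t p.2) (s, g s t))
    (hZ : DifferentiableAt 𝕜 (fun p : 𝕜 × E => Z s p.1 p.2) (t, g s t))
    (hVg : ∀ᶠ σ in 𝓝 s, V σ t (g σ t) = deriv (g σ) t)
    (hZg : ∀ᶠ τ in 𝓝 t, Z s τ (g s τ) = deriv (fun σ => g σ τ) s) :
    deriv (fun σ => V σ t (g s t)) s =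
      deriv (fun τ => Z s τ (g s t)) t + VectorField.lieBracket 𝕜 (V s t) (Z s t) (g s t) := by
  have hg_diff : DifferentiableAt 𝕜 (uncurry g) (s, t) :=
    (hg.of_le (le_minSmoothness.trans hn)).differentiableAt two_ne_zero
  have hg_left : DifferentiableAt 𝕜 (fun σ => g σ t) s :=
    hg_diff.comp (f := fun σ => (σ, t)) s (hasFDerivAt_prodMk_left s t).differentiableAt
  have hg_right : DifferentiableAt 𝕜 (g s) t :=
    hg_diff.comp (f := fun τ => (s, τ)) t (hasFDerivAt_prodMk_right s t).differentiableAt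
  have hV_chain : deriv (fun σ => V σ t (g σ t)) s =
      deriv (fun σ => V σ t (g s t)) s + fderiv 𝕜 (V s t) (g s t) (Z s t (g s t)) := by
    rw [hZg.self_of_nhds]
    exact deriv_comp_curve hV hg_left
  have hZ_chain : deriv (fun τ => Z s τ (g s τ)) t =
      deriv (fun τ => Z s τ (g s t)) t + fderiv 𝕜 (Z s t) (g s t) (V s t (g s t)) := by
    rw [hVg.self_of_nhds]
    exact deriv_comp_curve hZ hg_right
  have h_mixed : deriv (fun σ => V σ t (g σ t)) s = deriv (fun τ => Z s τ (g s τ)) t := by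
    rw [EventuallyEq.deriv_eq hVg, EventuallyEq.deriv_eq hZg]
    exact deriv_deriv_comm hn hg
  rw [hV_chain, hZ_chain] at h_mixed
  rw [VectorField.lieBracket, ← add_sub_assoc]
  exact eq_sub_of_add_eq h_mixed

end

/-- For a smooth two-parameter family of diffeomorphisms
`G s t : E → E` with time-velocity `V` and deformation-velocity `Z`
(both transported back by `G s t`), one has `∂ₛV = ∂ₜZ + [V, Z]`. -/
theorem two_parameter_velocity_identity {E : Type*} [NormedAddCommGroup E]
    [NormedSpace ℝ E] [CompleteSpace E]
    (G : ℝ → ℝ → E → E)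
    (hG : ContDiff ℝ (⊤ : ℕ∞) (fun p : ℝ × ℝ × E => G p.1 p.2.1 p.2.2))
    (Ginv : ℝ → ℝ → E → E)
    (hGinv : ContDiff ℝ (⊤ : ℕ∞) (fun p : ℝ × ℝ × E => Ginv p.1 p.2.1 p.2.2))
    (h_left_inv : ∀ s t x, Ginv s t (G s t x) = x)
    (h_right_inv : ∀ s t x, G s t (Ginv s t x) = x)
    (V Z : ℝ → ℝ → E → E)
    (hV : ContDiff ℝ (⊤ : ℕ∞) (fun p : ℝ × ℝ × E => V p.1 p.2.1 p.2.2))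
    (hZ : ContDiff ℝ (⊤ : ℕ∞) (fun p : ℝ × ℝ × E => Z p.1 p.2.1 p.2.2))
    (hVdef : ∀ s t x, V s t (G s t x) = deriv (fun τ => G s τ x) t)
    (hZdef : ∀ s t x, Z s t (G s t x) = deriv (fun σ => G σ t x) s) :
    ∀ (s t : ℝ) (y : E),
      deriv (fun σ => V σ t y) s =
        deriv (fun τ => Z s τ y) t
          + fderiv ℝ (Z s t) y (V s t y) - fderiv ℝ (V s t) y (Z s t y) := by
  intro s t y
  obtain ⟨x, rfl⟩ : ∃ x, G s t x = y := ⟨Ginv s t y, h_right_inv s t y⟩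
  rw [add_sub_assoc]
  exact two_parameter_velocity_identity_general (g := fun σ τ => G σ τ x) (n := (⊤ : ℕ∞))
    (by rw [minSmoothness_of_isRCLikeNormedField]; norm_cast)
    (hG.comp₃ contDiff_fst contDiff_snd contDiff_const).contDiffAt
    ((hV.comp₃ contDiff_fst contDiff_const contDiff_snd).differentiable (by simp) _)
    ((hZ.comp₃ contDiff_const contDiff_fst contDiff_snd).differentiable (by simp) _)
    (.of_forall fun σ => hVdef σ t x) (.of_forall fun τ => hZdef s τ x)
end

section
/- Let E be a finite-dimensional real vector space and ω : E × E → ℝ a nondegenerate alternating bilinear form. Let Z, V : [0,1] × [0,1] × E → E be smooth families of vector fields (smooth jointly in (s,t,x)) such that: (i) for each fixed (s,t), the 1-forms x ↦ ω(Z(s,t,x), ·) and x ↦ ω(V(s,t,x), ·) are closed, i.e. the bilinear form (ξ,η) ↦ D_x[ω(Z(s,t,·), ξ)](η) is symmetric in (ξ,η), and likewise for V; (ii) the linking identity ∂_sV(s,t,x) = ∂_tZ(s,t,x) + D_xZ(s,t,x)(V(s,t,x)) − D_xV(s,t,x)(Z(s,t,x)) holds; (iii) ∫₀¹ ω(Z(s,t,x),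 ξ) ds = 0 for all t ∈ [0,1], x ∈ E, ξ ∈ E; and (iv) V(0,t,x) = 0 for all t, x. Then for each t, setting u_t(x) = ∫₀¹ ω(Z(s,t,x), V(s,t,x)) ds, one has ω(V(1,t,x), ξ) = D u_t(x)(ξ) for all x ∈ E and ξ ∈ E; that is, i(V_{(1,t)})ω = du_t, so V_{(1,t)} is a Hamiltonian vector field with Hamiltonian u_t. -/
/-!
For a constant alternating form `ω` and closed `1`-forms `i_Xω`, `i_Yω`, Cartan's formula gives
`d(ω(X, Y)) = i_{[Y, X]}ω`. Contracting `∂ₛV = ∂ₜZ + [V, Z]` with `ω` therefore yields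
`∂ₛ(i_Vω) = ∂ₜ(i_Zω) + d(ω(Z, V))`. Integrated over `s`, the left-hand side telescopes, the last
term becomes `du_t` with `u_t = ∫ ω(Z, V) ds`, and the middle one is the `t`-derivative of
`∫ i_Zω ds = 0`.
-/

open Function MeasureTheory Set VectorField
open scoped Interval Topology

section ParametricIntegral

theorem hasFDerivAt_intervalIntegral_of_continuous_fderiv {𝕜 H G : Type*} [RCLike 𝕜]
    [NormedAddCommGroup H] [NormedSpace 𝕜 H]
    [NormedAddCommGroup G] [NormedSpace ℝ G] [NormedSpace 𝕜 G]
    {μ : Measure ℝ} [IsLocallyFiniteMeasure μ] {f : ℝ → H → G}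
    (hf : ∀ y, Continuous fun s => f s y) (hf_diff : ∀ s, Differentiable 𝕜 (f s))
    (hf' : Continuous fun p : ℝ × H => fderiv 𝕜 (f p.1) p.2) (a b : ℝ) (x : H) :
    HasFDerivAt (fun y => ∫ s in a..b, f s y ∂μ) (∫ s in a..b, fderiv 𝕜 (f s) x ∂μ) x := by
  have hf'x : Continuous fun s => fderiv 𝕜 (f s) x := hf'.comp (by fun_prop : Continuous (·, x))
  obtain ⟨C, hC⟩ := isCompact_uIcc.exists_bound_of_continuousOn (hf'x.continuousOn (s := [[a, b]]))
  have h_bound : ∀ᶠ y in 𝓝 x, ∀ s ∈ [[a, b]], ‖fderiv 𝕜 (f s) y‖ < C + 1 := by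
    refine isCompact_uIcc.eventually_forall_of_forall_eventually fun s hs => ?_
    have h_cont : Continuous fun p : H × ℝ => ‖fderiv 𝕜 (f p.2) p.1‖ :=
      (hf'.comp continuous_swap).norm
    exact h_cont.continuousAt.eventually_lt_const ((hC s hs).trans_lt (lt_add_one C))
  exact intervalIntegral.hasFDerivAt_integral_of_dominated_of_fderiv_le
    (F := fun y s => f s y) (F' := fun y s => fderiv 𝕜 (f s) y) h_bound
    (.of_forall fun y => (hf y).aestronglyMeasurable)
    ((hf x).intervalIntegrable a b)
    hf'x.aestronglyMeasurable
    (.of_forall fun s hs y hy => (hy s (uIoc_subset_uIcc hs)).le)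
    intervalIntegrable_const
    (.of_forall fun s _ y _ => (hf_diff s y).hasFDerivAt)

variable {H G : Type*} [NormedAddCommGroup H] [NormedSpace ℝ H]
  [NormedAddCommGroup G] [NormedSpace ℝ G]

theorem continuous_fderiv_of_contDiff_uncurry {P : Type*} [NormedAddCommGroup P] [NormedSpace ℝ P]
    {f : P → H → G} (hf : ContDiff ℝ 1 ↿f) : Continuous fun p : P × H => fderiv ℝ (f p.1) p.2 :=
  contDiff_zero.1 <| ContDiff.fderiv (f := fun p : P × H => f p.1) (n := 0)
    (hf.comp (by fun_prop : ContDiff ℝ 1 fun q : (P × H) × H => (q.1.1, q.2))) contDiff_snd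
    (zero_add 1).le

theorem hasFDerivAt_intervalIntegral_of_contDiff {f : ℝ → H → G} (hf : ContDiff ℝ 1 ↿f)
    (a b : ℝ) (x : H) :
    HasFDerivAt (fun y => ∫ s in a..b, f s y) (∫ s in a..b, fderiv ℝ (f s) x) x :=
  hasFDerivAt_intervalIntegral_of_continuous_fderiv
    (fun y => hf.continuous.comp (by fun_prop : Continuous fun s : ℝ => (s, y)))
    (fun s => (hf.comp (contDiff_prodMk_right s)).differentiable one_ne_zero)
    (continuous_fderiv_of_contDiff_uncurry hf) a b x

theorem continuous_deriv_of_contDiff_uncurry {f : ℝ → ℝ → G} (hf : ContDiff ℝ 1 ↿f) (t : ℝ) :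
    Continuous fun s => deriv (f s) t := by
  have h := (continuous_fderiv_of_contDiff_uncurry hf).comp (by fun_prop : Continuous (·, t))
  simpa only [comp_def, fderiv_apply_one_eq_deriv] using
    h.clm_apply (continuous_const (y := (1 : ℝ)))

theorem hasDerivAt_intervalIntegral_of_contDiff {f : ℝ → ℝ → G} (hf : ContDiff ℝ 1 ↿f)
    (a b t : ℝ) :
    HasDerivAt (fun τ => ∫ s in a..b, f s τ) (∫ s in a..b, deriv (f s) t) t := by
  have h_cont : Continuous fun s => fderiv ℝ (f s) t :=
    (continuous_fderiv_of_contDiff_uncurry hf).comp (by fun_prop : Continuous (·, t))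
  have h := (hasFDerivAt_intervalIntegral_of_contDiff hf a b t).hasDerivAt
  simpa only [ContinuousLinearMap.intervalIntegral_apply (h_cont.intervalIntegrable a b),
    fderiv_apply_one_eq_deriv] using h

theorem deriv_intervalIntegral_eq_zero_of_forall_apply {f : ℝ → ℝ → H →L[ℝ] G}
    (hf : ContDiff ℝ 1 ↿f) {a b t : ℝ} {J : Set ℝ} (hJ : UniqueDiffWithinAt ℝ J t) (ht : t ∈ J)
    (h_int : ∀ τ ∈ J, ∀ ξ, ∫ s in a..b, f s τ ξ = 0) :
    deriv (fun τ => ∫ s in a..b, f s τ) t = 0 := by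
  have h_zero (τ : ℝ) (hτ : τ ∈ J) : ∫ s in a..b, f s τ = 0 := by
    have h_cont : Continuous fun s => f s τ :=
      hf.continuous.comp (by fun_prop : Continuous fun s : ℝ => (s, τ))
    ext ξ
    rw [ContinuousLinearMap.intervalIntegral_apply (h_cont.intervalIntegrable a b), h_int τ hτ,
      zero_apply]
  have h_deriv := (hasDerivAt_intervalIntegral_of_contDiff hf a b t).differentiableAt.hasDerivAt
  exact hJ.eq_deriv _ h_deriv.hasDerivWithinAt
    ((hasDerivWithinAt_const t J 0).congr h_zero (h_zero t ht))

end ParametricIntegral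

section SymplecticFields

variable {E F : Type*} [NormedAddCommGroup E] [NormedSpace ℝ E]
  [NormedAddCommGroup F] [NormedSpace ℝ F] {ω : E →L[ℝ] E →L[ℝ] F}

/-- The vector field `X` is infinitesimally symplectic at `x`: the exterior derivative of the
`1`-form `i_Xω = ω(X, ·)` vanishes at `x`. Since `ω` is constant, this is the symmetry of the
derivative of `i_Xω`, written here in components. -/
def IsSymplecticFieldAt (ω : E →L[ℝ] E →L[ℝ] F) (X : E → E) (x : E) : Prop :=
  ∀ ξ η, fderiv ℝ (fun y => ω (X y) ξ) x η = fderiv ℝ (fun y => ω (X y) η) x ξ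

theorem isSymplecticFieldAt_iff {X : E → E} {x : E} (hX : DifferentiableAt ℝ X x) :
    IsSymplecticFieldAt ω X x ↔ ∀ ξ η, ω (fderiv ℝ X x ξ) η = ω (fderiv ℝ X x η) ξ := by
  have h_fderiv (ξ η : E) : fderiv ℝ (fun y => ω (X y) ξ) x η = ω (fderiv ℝ X x η) ξ :=
    DFunLike.congr_fun ((ω.flip ξ).hasFDerivAt.comp x hX.hasFDerivAt).fderiv η
  simp only [IsSymplecticFieldAt, h_fderiv]
  exact forall_comm

theorem hasFDerivAt_apply_apply_of_isSymplecticFieldAt (h_alt : ω.toLinearMap₁₂.IsAlt)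
    {X Y : E → E} {x : E} (hX : DifferentiableAt ℝ X x) (hY : DifferentiableAt ℝ Y x)
    (hX_symp : IsSymplecticFieldAt ω X x) (hY_symp : IsSymplecticFieldAt ω Y x) :
    HasFDerivAt (fun y => ω (X y) (Y y)) (ω (lieBracket ℝ Y X x)) x := by
  refine ((ω.hasFDerivAt.comp x hX.hasFDerivAt).clm_apply hY.hasFDerivAt).congr_fderiv ?_
  ext ξ
  calc ω (X x) (fderiv ℝ Y x ξ) + ω (fderiv ℝ X x ξ) (Y x)
      = ω (fderiv ℝ X x ξ) (Y x) - ω (fderiv ℝ Y x ξ) (X x) := by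
        rw [show ω (X x) (fderiv ℝ Y x ξ) = -ω (fderiv ℝ Y x ξ) (X x) from (h_alt.neg _ _).symm]
        abel
    _ = ω (fderiv ℝ X x (Y x)) ξ - ω (fderiv ℝ Y x (X x)) ξ := by
        rw [(isSymplecticFieldAt_iff hX).1 hX_symp, (isSymplecticFieldAt_iff hY).1 hY_symp]
    _ = ω (lieBracket ℝ Y X x) ξ := by
        rw [lieBracket, map_sub, sub_apply]

variable {Z V : ℝ → ℝ → E → E} {a b t : ℝ} {x : E}

theorem contDiff_uncurry_contraction (hZ : ContDiff ℝ 1 ↿Z) (x : E) :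
    ContDiff ℝ 1 ↿fun s t => ω (Z s t x) :=
  ω.contDiff.comp (hZ.comp (by fun_prop : ContDiff ℝ 1 fun p : ℝ × ℝ => (p.1, p.2, x)))

theorem hasDerivAt_apply_of_deriv_eq_add_lieBracket (h_alt : ω.toLinearMap₁₂.IsAlt) {s : ℝ}
    (hZ : ContDiff ℝ 1 ↿Z) (hV : ContDiff ℝ 1 ↿V)
    (hZ_symp : IsSymplecticFieldAt ω (Z s t) x) (hV_symp : IsSymplecticFieldAt ω (V s t) x)
    (h_link : deriv (fun σ => V σ t x) s =
      deriv (fun τ => Z s τ x) t + lieBracket ℝ (V s t) (Z s t) x) :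
    HasDerivAt (fun σ => ω (V σ t x))
      (deriv (fun τ => ω (Z s τ x)) t + fderiv ℝ (fun y => ω (Z s t y) (V s t y)) x) s := by
  have h_slice : ContDiff ℝ 1 fun y : E => (s, t, y) := by fun_prop
  have hZx : DifferentiableAt ℝ (Z s t) x := (hZ.comp h_slice).differentiable one_ne_zero x
  have hVx : DifferentiableAt ℝ (V s t) x := (hV.comp h_slice).differentiable one_ne_zero x
  have hZt : DifferentiableAt ℝ (fun τ => Z s τ x) t :=
    (hZ.comp (by fun_prop : ContDiff ℝ 1 fun τ : ℝ => (s, τ, x))).differentiable one_ne_zero t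
  have hVs : DifferentiableAt ℝ (fun σ => V σ t x) s :=
    (hV.comp (by fun_prop : ContDiff ℝ 1 fun σ : ℝ => (σ, t, x))).differentiable one_ne_zero s
  have h_deriv : deriv (fun τ => ω (Z s τ x)) t = ω (deriv (fun τ => Z s τ x) t) :=
    (ω.hasFDerivAt.comp_hasDerivAt t hZt.hasDerivAt).deriv
  have h_fderiv :=
    (hasFDerivAt_apply_apply_of_isSymplecticFieldAt h_alt hZx hVx hZ_symp hV_symp).fderiv
  rw [h_deriv, h_fderiv, ← map_add, ← h_link]
  exact ω.hasFDerivAt.comp_hasDerivAt s hVs.hasDerivAt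

theorem hasFDerivAt_integral_apply_apply_of_deriv_eq_add_lieBracket [CompleteSpace F]
    (h_alt : ω.toLinearMap₁₂.IsAlt) (hZ : ContDiff ℝ 1 ↿Z) (hV : ContDiff ℝ 1 ↿V)
    (hZ_symp : ∀ s ∈ [[a, b]], IsSymplecticFieldAt ω (Z s t) x)
    (hV_symp : ∀ s ∈ [[a, b]], IsSymplecticFieldAt ω (V s t) x)
    (h_link : ∀ s ∈ [[a, b]], deriv (fun σ => V σ t x) s =
      deriv (fun τ => Z s τ x) t + lieBracket ℝ (V s t) (Z s t) x) :
    HasFDerivAt (fun y => ∫ s in a..b, ω (Z s t y) (V s t y))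
      (ω (V b t x) - ω (V a t x) - deriv (fun τ => ∫ s in a..b, ω (Z s τ x)) t) x := by
  have h_mean := contDiff_uncurry_contraction (ω := ω) hZ x
  have h_slice : ContDiff ℝ 1 fun p : ℝ × E => (p.1, t, p.2) := by fun_prop
  have h_pair : ContDiff ℝ 1 ↿fun s y => ω (Z s t y) (V s t y) :=
    (ω.contDiff.comp (hZ.comp h_slice)).clm_apply (hV.comp h_slice)
  have h_mean_cont := continuous_deriv_of_contDiff_uncurry h_mean t
  have h_pair_cont : Continuous fun s => fderiv ℝ (fun y => ω (Z s t y) (V s t y)) x :=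
    (continuous_fderiv_of_contDiff_uncurry h_pair).comp (by fun_prop : Continuous (·, x))
  have h_ftc := intervalIntegral.integral_eq_sub_of_hasDerivAt
    (fun s hs => hasDerivAt_apply_of_deriv_eq_add_lieBracket h_alt hZ hV
      (hZ_symp s hs) (hV_symp s hs) (h_link s hs))
    ((h_mean_cont.add h_pair_cont).intervalIntegrable a b)
  rw [intervalIntegral.integral_add (h_mean_cont.intervalIntegrable a b)
    (h_pair_cont.intervalIntegrable a b)] at h_ftc
  rw [(hasDerivAt_intervalIntegral_of_contDiff h_mean a b t).deriv, ← h_ftc, add_sub_cancel_left]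
  exact hasFDerivAt_intervalIntegral_of_contDiff h_pair a b x

theorem hamiltonian_from_deformation_general [CompleteSpace F]
    (h_alt : ω.toLinearMap₁₂.IsAlt) (hZ : ContDiff ℝ 1 ↿Z) (hV : ContDiff ℝ 1 ↿V)
    (hZ_symp : ∀ s ∈ [[a, b]], IsSymplecticFieldAt ω (Z s t) x)
    (hV_symp : ∀ s ∈ [[a, b]], IsSymplecticFieldAt ω (V s t) x)
    (h_link : ∀ s ∈ [[a, b]], deriv (fun σ => V σ t x) s =
      deriv (fun τ => Z s τ x) t + lieBracket ℝ (V s t) (Z s t) x)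
    {J : Set ℝ} (hJ : UniqueDiffWithinAt ℝ J t) (ht : t ∈ J)
    (h_int : ∀ τ ∈ J, ∀ ξ, ∫ s in a..b, ω (Z s τ x) ξ = 0) :
    HasFDerivAt (fun y => ∫ s in a..b, ω (Z s t y) (V s t y)) (ω (V b t x) - ω (V a t x)) x := by
  have h_mean :=
    deriv_intervalIntegral_eq_zero_of_forall_apply (contDiff_uncurry_contraction hZ x) hJ ht h_int
  simpa only [h_mean, sub_zero] using
    hasFDerivAt_integral_apply_apply_of_deriv_eq_add_lieBracket h_alt hZ hV hZ_symp hV_symp h_link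

end SymplecticFields

/-- The Proposition of Section 3 in the single-chart setting:
if `Z`, `V` are smooth families of symplectic vector fields satisfying
`∂ₛV = ∂ₜZ + [V,Z]`, with `∫₀¹ i(Z_{s,t})ω ds = 0` and `V_{0,t} = 0`, then
`i(V_{1,t})ω = d u_t` where `u_t(x) = ∫₀¹ ω(Z(s,t,x), V(s,t,x)) ds`. -/
theorem hamiltonian_from_deformation {E : Type*} [NormedAddCommGroup E]
    [NormedSpace ℝ E] [FiniteDimensional ℝ E]
    (ω : E →ₗ[ℝ] E →ₗ[ℝ] ℝ)
    (h_alt : ∀ x : E, ω x x = 0)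
    (h_nondeg : ∀ x : E, (∀ ξ : E, ω x ξ = 0) → x = 0)
    (Z V : ℝ → ℝ → E → E)
    (hZ_smooth : ContDiff ℝ (⊤ : ℕ∞) (fun p : ℝ × ℝ × E => Z p.1 p.2.1 p.2.2))
    (hV_smooth : ContDiff ℝ (⊤ : ℕ∞) (fun p : ℝ × ℝ × E => V p.1 p.2.1 p.2.2))
    (hZ_closed : ∀ (s t : ℝ) (x ξ η : E),
      fderiv ℝ (fun y => ω (Z s t y) ξ) x η = fderiv ℝ (fun y => ω (Z s t y) η) x ξ)
    (hV_closed : ∀ (s t : ℝ) (x ξ η : E),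
      fderiv ℝ (fun y => ω (V s t y) ξ) x η = fderiv ℝ (fun y => ω (V s t y) η) x ξ)
    (h_link : ∀ (s t : ℝ) (x : E),
      deriv (fun σ => V σ t x) s =
        deriv (fun τ => Z s τ x) t
          + fderiv ℝ (Z s t) x (V s t x) - fderiv ℝ (V s t) x (Z s t x))
    (h_int : ∀ t ∈ Set.Icc (0:ℝ) 1, ∀ x ξ : E,
      (∫ s in (0:ℝ)..1, ω (Z s t x) ξ) = 0)
    (h_V0 : ∀ (t : ℝ) (x : E), V 0 t x = 0) :
    ∀ t ∈ Set.Icc (0:ℝ) 1, ∀ x ξ : E,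
      ω (V 1 t x) ξ =
        fderiv ℝ (fun y => ∫ s in (0:ℝ)..1, ω (Z s t y) (V s t y)) x ξ := by
  intro t ht x ξ
  have h := hamiltonian_from_deformation_general (ω := ω.toContinuousBilinearMap)
    (a := 0) (b := 1) h_alt (hZ_smooth.of_le (by simp)) (hV_smooth.of_le (by simp))
    (fun s _ => hZ_closed s t x) (fun s _ => hV_closed s t x)
    (fun s _ => (h_link s t x).trans (add_sub_assoc _ _ _))
    (uniqueDiffOn_Icc one_pos t ht) ht (fun τ hτ => h_int τ hτ x)
  rw [h_V0, map_zero, sub_zero] at h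
  exact DFunLike.congr_fun h.fderiv.symm ξ
end
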